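/- (Prony uniqueness) Let r be a positive integer. Let z_1,…,z_r ∈ ℂ be pairwise distinct and nonzero with amplitudes b_1,…,b_r ∈ ℂ all nonzero, and let w_1,…,w_r ∈ ℂ be pairwise distinct and nonzero with amplitudes c_1,…,c_r ∈ ℂ all nonzero. If Σ_{ℓ=1}^r b_ℓ z_ℓ^k = Σ_{ℓ=1}^r c_ℓ w_ℓ^k for every k = 0, 1, …, 2r−1, then the multisets of pairs {(z_ℓ, b_ℓ) : ℓ = 1,…,r} and {(w_ℓ, c_ℓ) : ℓ = 1,…,r} coincide; that is, there is a permutation σ of {1,…,r} with w_{σ(ℓ)} = z_ℓ and c_{σ(ℓ)} = b_ℓ for all ℓ. In particular, the two exponential sums agree for every integer k ≥ 0. -/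

import Mathlib

/-!
Encode a signal `k ↦ ∑ ℓ, b ℓ * z ℓ ^ k` by the finitely supported function sending each node to
its amplitude. The difference of the functions encoding two signals is supported on at most as many
points as there are terms in total, and its moments of all smaller orders vanish, so it is zero
because Vandermonde matrices with distinct nodes are invertible. When the nodes are distinct and
the amplitudes nonzero, the pairs (node, amplitude) can be read off from the encoding: the nodes
form its support and the amplitudes are its values there.
-/

section NodeAmplitude

open Finset

variable {ι κ α M R : Type*} [Fintype ι] [Fintype κ]

/-- The discrete spectrum of an exponential signal with nodes `z` and amplitudes `b`: each point of
`α` is sent to the sum of the amplitudes `b ℓ` over the indices `ℓ` whose node `z ℓ` is that point.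
Nodes need not be distinct. -/
noncomputable def nodeAmplitude [AddCommMonoid M] (z : ι → α) (b : ι → M) : α →₀ M :=
  Finsupp.mapDomain z (Finsupp.equivFunOnFinite.symm b)

section AddCommMonoid

variable [AddCommMonoid M] {z : ι → α} {w : κ → α} {b : ι → M} {c : κ → M}

theorem nodeAmplitude_apply (hz : Function.Injective z) (ℓ : ι) :
    nodeAmplitude z b (z ℓ) = b ℓ :=
  Finsupp.mapDomain_apply hz _ _

theorem card_support_nodeAmplitude_le (z : ι → α) (b : ι → M) :
    #(nodeAmplitude z b).support ≤ Fintype.card ι := by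
  classical
  calc #(nodeAmplitude z b).support
      ≤ #((Finsupp.equivFunOnFinite.symm b).support.image z) :=
        card_le_card Finsupp.mapDomain_support
    _ ≤ #(Finsupp.equivFunOnFinite.symm b).support := card_image_le
    _ ≤ Fintype.card ι := card_le_univ _

theorem coe_support_nodeAmplitude (hz : Function.Injective z) (hb : ∀ ℓ, b ℓ ≠ 0) :
    ((nodeAmplitude z b).support : Set α) = Set.range z := by
  classical
  have support_eq_univ : (Finsupp.equivFunOnFinite.symm b).support = univ := by
    ext ℓ
    simp [hb ℓ]
  rw [nodeAmplitude, Finsupp.mapDomain_support_of_injective hz, support_eq_univ, coe_image,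
    coe_univ, Set.image_univ]

theorem exists_equiv_of_nodeAmplitude_eq (hz : Function.Injective z) (hb : ∀ ℓ, b ℓ ≠ 0)
    (hw : Function.Injective w) (hc : ∀ ℓ, c ℓ ≠ 0) (h : nodeAmplitude z b = nodeAmplitude w c) :
    ∃ σ : ι ≃ κ, ∀ ℓ, w (σ ℓ) = z ℓ ∧ c (σ ℓ) = b ℓ := by
  have range_eq : Set.range z = Set.range w := by
    rw [← coe_support_nodeAmplitude hz hb, h, coe_support_nodeAmplitude hw hc]
  let σ : ι ≃ κ :=
    (Equiv.ofInjective z hz).trans ((Equiv.setCongr range_eq).trans (Equiv.ofInjective w hw).symm)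
  have node_eq (ℓ : ι) : w (σ ℓ) = z ℓ := Equiv.apply_ofInjective_symm hw _
  refine ⟨σ, fun ℓ => ⟨node_eq ℓ, ?_⟩⟩
  calc c (σ ℓ) = nodeAmplitude w c (w (σ ℓ)) := (nodeAmplitude_apply hw _).symm
    _ = nodeAmplitude z b (z ℓ) := by rw [node_eq, h]
    _ = b ℓ := nodeAmplitude_apply hz ℓ

end AddCommMonoid

theorem linearCombination_pow_nodeAmplitude [Semiring R] (z b : ι → R) (k : ℕ) :
    Finsupp.linearCombination R (· ^ k) (nodeAmplitude z b) = ∑ ℓ, b ℓ * z ℓ ^ k := by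
  rw [nodeAmplitude, Finsupp.linearCombination_mapDomain, Finsupp.linearCombination_apply,
    Finsupp.sum_fintype _ _ (by simp)]
  rfl

variable [CommRing R] [IsDomain R]

theorem finsupp_eq_zero_of_forall_linearCombination_pow_eq_zero {d : R →₀ R}
    (h : ∀ k < #d.support, Finsupp.linearCombination R (· ^ k) d = 0) : d = 0 := by
  let e := d.support.equivFin.symm
  have values_eq_zero : (fun i => d (e i)) = 0 := by
    refine Matrix.eq_zero_of_forall_pow_sum_mul_pow_eq_zero
      (f := fun i => (e i : R)) (Subtype.val_injective.comp e.injective) fun k => ?_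
    calc ∑ i, d (e i) * (e i : R) ^ (k : ℕ)
        = ∑ x : d.support, d x * (x : R) ^ (k : ℕ) :=
          e.sum_comp fun x => d x * (x : R) ^ (k : ℕ)
      _ = ∑ x ∈ d.support, d x * x ^ (k : ℕ) :=
          sum_coe_sort d.support fun x => d x * x ^ (k : ℕ)
      _ = 0 := h k k.isLt
  rw [← Finsupp.support_eq_empty, eq_empty_iff_forall_notMem]
  intro x hx
  exact Finsupp.mem_support_iff.mp hx (by simpa using congrFun values_eq_zero (e.symm ⟨x, hx⟩))

theorem nodeAmplitude_eq_of_forall_sum_mul_pow_eq {z b : ι → R} {w c : κ → R}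
    (h : ∀ k < Fintype.card ι + Fintype.card κ,
      ∑ ℓ, b ℓ * z ℓ ^ k = ∑ ℓ, c ℓ * w ℓ ^ k) :
    nodeAmplitude z b = nodeAmplitude w c := by
  classical
  have card_support_sub_le : #(nodeAmplitude z b - nodeAmplitude w c).support ≤
      Fintype.card ι + Fintype.card κ :=
    (card_le_card Finsupp.support_sub).trans <| (card_union_le _ _).trans <|
      add_le_add (card_support_nodeAmplitude_le z b) (card_support_nodeAmplitude_le w c)
  refine sub_eq_zero.mp (finsupp_eq_zero_of_forall_linearCombination_pow_eq_zero fun k hk => ?_)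
  rw [map_sub, linearCombination_pow_nodeAmplitude, linearCombination_pow_nodeAmplitude,
    h k (hk.trans_le card_support_sub_le), sub_self]

theorem prony_uniqueness_general {z b : ι → R} {w c : κ → R}
    (hz : Function.Injective z) (hb : ∀ ℓ, b ℓ ≠ 0)
    (hw : Function.Injective w) (hc : ∀ ℓ, c ℓ ≠ 0)
    (h : ∀ k < Fintype.card ι + Fintype.card κ,
      ∑ ℓ, b ℓ * z ℓ ^ k = ∑ ℓ, c ℓ * w ℓ ^ k) :
    (∃ σ : ι ≃ κ, ∀ ℓ, w (σ ℓ) = z ℓ ∧ c (σ ℓ) = b ℓ) ∧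
      ∀ k : ℕ, ∑ ℓ, b ℓ * z ℓ ^ k = ∑ ℓ, c ℓ * w ℓ ^ k := by
  have spectrum_eq : nodeAmplitude z b = nodeAmplitude w c :=
    nodeAmplitude_eq_of_forall_sum_mul_pow_eq h
  refine ⟨exists_equiv_of_nodeAmplitude_eq hz hb hw hc spectrum_eq, fun k => ?_⟩
  rw [← linearCombination_pow_nodeAmplitude, spectrum_eq, linearCombination_pow_nodeAmplitude]

end NodeAmplitude

/-- **Prony uniqueness.** Two `r`-term exponential signals with pairwise distinct
nonzero nodes and nonzero amplitudes that agree on the `2r` samples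
`k = 0, 1, …, 2r−1` have the same multiset of (node, amplitude) pairs, and in
particular agree on every sample `k ≥ 0`. -/
theorem prony_uniqueness
    (r : ℕ) (hr : 0 < r)
    (z w b c : Fin r → ℂ)
    (hz : Function.Injective z) (hz0 : ∀ ℓ, z ℓ ≠ 0) (hb : ∀ ℓ, b ℓ ≠ 0)
    (hw : Function.Injective w) (hw0 : ∀ ℓ, w ℓ ≠ 0) (hc : ∀ ℓ, c ℓ ≠ 0)
    (h : ∀ k : ℕ, k < 2 * r → ∑ ℓ, b ℓ * z ℓ ^ k = ∑ ℓ, c ℓ * w ℓ ^ k) :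
    (∃ σ : Equiv.Perm (Fin r), ∀ ℓ, w (σ ℓ) = z ℓ ∧ c (σ ℓ) = b ℓ) ∧
      ∀ k : ℕ, ∑ ℓ, b ℓ * z ℓ ^ k = ∑ ℓ, c ℓ * w ℓ ^ k :=
  prony_uniqueness_general hz hb hw hc (by simpa [two_mul] using h)
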